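/- arXiv:1409.8130 — 2 statements merged into one kernel-verified Lean document; each statement's English description precedes it below -/
import Mathlib

section
/- Dual mass evolution equation: assume J is invertible, −D̄₂ W = R D₂ (the discrete Coriolis identity, with D̄₂ = D₁ᵀ), and D̄₂ H = J D̄₂. Let F : ℝ → (E → ℝ) be a time-dependent primal mass flux, let F̂⊥ : ℝ → (E → ℝ) satisfy H.mulVec (F̂⊥ t) = −W.mulVec (F t) for all t, and let Φ : ℝ → (C → ℝ) be differentiable with Φ'(t) = −D₂.mulVec (F t). Define the dual mass field Φ̄(t) := J⁻¹.mulVec (R.mulVec (Φ t)). Then Φ̄ is differentiable and Φ̄'(t) + D̄₂.mulVec (F̂⊥ t) = 0 for all t; i.e., the dual mass evolves exactly as under a finite volume divergence of the dual mass fluxes. -/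
open Matrix

/-! Applying `D̄₂` to `H F̂⊥ = -W F` gives `J D̄₂ F̂⊥ = D̄₂ H F̂⊥ = -D̄₂ W F = R D₂ F`, so that
`D̄₂ F̂⊥ = J⁻¹ R D₂ F`. Since `J⁻¹ R` is constant in time, the right-hand side is minus the
derivative of `J⁻¹ R Φ`. -/

theorem hodge_dual_divergence_eq_average_divergence {α C E V : Type*} [NonUnitalRing α]
    [Fintype C] [Fintype E] [Fintype V]
    {D₂ : Matrix C E α} {Dbar : Matrix V E α} {W H : Matrix E E α}
    {R : Matrix V C α} {J : Matrix V V α} {f fhatperp : E → α}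
    (hTRiSK : -(Dbar * W) = R * D₂) (hDH : Dbar * H = J * Dbar)
    (hf : H *ᵥ fhatperp = -(W *ᵥ f)) :
    J *ᵥ (Dbar *ᵥ fhatperp) = R *ᵥ (D₂ *ᵥ f) :=
  calc
    J *ᵥ (Dbar *ᵥ fhatperp) = Dbar *ᵥ (H *ᵥ fhatperp) := by
      rw [mulVec_mulVec, ← hDH, mulVec_mulVec]
    _ = -(Dbar * W) *ᵥ f := by
      rw [hf, mulVec_neg, mulVec_mulVec, neg_mulVec]
    _ = R *ᵥ (D₂ *ᵥ f) := by
      rw [hTRiSK, mulVec_mulVec]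

section Derivative

variable {𝕜 𝔸 C V : Type*} [NontriviallyNormedField 𝕜] [Fintype C]

theorem hasDerivAt_const_mulVec [NormedRing 𝔸] [NormedAlgebra 𝕜 𝔸] (A : Matrix V C 𝔸)
    {u : 𝕜 → C → 𝔸} {u' : C → 𝔸} {t : 𝕜} (hu : HasDerivAt u u' t) :
    HasDerivAt (fun s => A *ᵥ u s) (A *ᵥ u') t :=
  hasDerivAt_pi.2 fun i =>
    HasDerivAt.fun_sum fun j _ => (hasDerivAt_pi.1 hu j).const_mul (A i j)

theorem dual_mass_evolution_general {E : Type*} [Fintype E] [Fintype V] [DecidableEq V]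
    [NormedCommRing 𝔸] [NormedAlgebra 𝕜 𝔸]
    {D₂ : Matrix C E 𝔸} {Dbar : Matrix V E 𝔸} {W H : Matrix E E 𝔸}
    {R : Matrix V C 𝔸} {J : Matrix V V 𝔸} (hJ : IsUnit J.det)
    (hTRiSK : -(Dbar * W) = R * D₂) (hDH : Dbar * H = J * Dbar)
    {f fhatperp : E → 𝔸} {Φ : 𝕜 → C → 𝔸} {t : 𝕜}
    (hf : H *ᵥ fhatperp = -(W *ᵥ f)) (hΦ : HasDerivAt Φ (-(D₂ *ᵥ f)) t) :
    HasDerivAt (fun s => J⁻¹ *ᵥ (R *ᵥ Φ s)) (-(Dbar *ᵥ fhatperp)) t := by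
  let _ := J.invertibleOfIsUnitDet hJ
  have hdiv : J⁻¹ *ᵥ (R *ᵥ (D₂ *ᵥ f)) = Dbar *ᵥ fhatperp :=
    inv_mulVec_eq_vec (hodge_dual_divergence_eq_average_divergence hTRiSK hDH hf).symm
  rw [← hdiv, ← mulVec_neg, ← mulVec_neg]
  exact hasDerivAt_const_mulVec J⁻¹ (hasDerivAt_const_mulVec R hΦ)

end Derivative

/-- Dual mass evolution equation: assuming `J` invertible, the discrete
Coriolis identity `-D̄₂ W = R D₂` (with `D̄₂ = D₁ᵀ`), and `D̄₂ H = J D̄₂`,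
if the dual mass fluxes satisfy `H F̂⊥ = -W F` and the primal mass obeys
`Φ' = -D₂ F`, then the dual mass field `Φ̄ = J⁻¹ R Φ` is differentiable
and satisfies the finite-volume-form equation `Φ̄' + D̄₂ F̂⊥ = 0`. -/
theorem dual_mass_evolution
    {C E V : Type*} [Fintype C] [Fintype E] [Fintype V] [DecidableEq V]
    (D₂ : Matrix C E ℝ) (D₁ : Matrix E V ℝ)
    (W H : Matrix E E ℝ) (R : Matrix V C ℝ) (J : Matrix V V ℝ)
    (hJ : IsUnit J.det)
    (hTRiSK : -(D₁ᵀ * W) = R * D₂) (hDH : D₁ᵀ * H = J * D₁ᵀ)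
    (F : ℝ → E → ℝ) (Fhatperp : ℝ → E → ℝ) (Φ : ℝ → C → ℝ)
    (hF : ∀ t : ℝ, H.mulVec (Fhatperp t) = -(W.mulVec (F t)))
    (hΦ : ∀ t : ℝ, HasDerivAt Φ (-(D₂.mulVec (F t))) t) :
    ∀ t : ℝ, HasDerivAt (fun s : ℝ => J⁻¹.mulVec (R.mulVec (Φ s)))
      (-(D₁ᵀ.mulVec (Fhatperp t))) t :=
  fun t => dual_mass_evolution_general hJ hTRiSK hDH (hF t) (hΦ t)
end

section
/- Dual potential vorticity evolution equation: assume J is invertible, D₂ D₁ = 0, and D̄₂ H = J D̄₂, where D̄₁ = −D₂ᵀ and D̄₂ = D₁ᵀ. Let U : ℝ → (E → ℝ) be differentiable and satisfy the momentum equation M.mulVec (U' t) = −M.mulVec (Q⊥ t) − D̄₁.mulVec (L.mulVec (S t)) for time-dependent vectors Q⊥ : ℝ → (E → ℝ) and S : ℝ → (C → ℝ), and suppose M.mulVec (Q⊥ t) = H.mulVec (Q̂⊥ t) for all t. Define the dual absolute vorticity Ξ̂(t) := J⁻¹.mulVec (D̄₂.mulVec (M.mulVec (U t))). Then Ξ̂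 is differentiable and Ξ̂'(t) + D̄₂.mulVec (Q̂⊥ t) = 0 for all t; i.e., the dual vorticity evolves in flux form under the dual-mesh potential vorticity fluxes, consistently with the dual mass equation. -/
open Matrix

/-! Apply `J⁻¹ D̄₂` to the momentum equation. The potential term vanishes because
`D̄₂ D̄₁ = -(D₂ D₁)ᵀ = 0`, the discrete curl of a gradient. The flux term is `-J⁻¹ D̄₂ H Q̂⊥`,
and the intertwining of `H` and `J` by `D̄₂` turns it into `-J⁻¹ J D̄₂ Q̂⊥ = -D̄₂ Q̂⊥`. Since
`J⁻¹ D̄₂ M` does not depend on time, it commutes with the time derivative. -/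

theorem transpose_mulVec_transpose_mulVec_eq_zero {l m n R : Type*} [Fintype l] [Fintype m]
    [NonUnitalCommSemiring R] {A : Matrix l m R} {B : Matrix m n R} (hAB : A * B = 0)
    (v : l → R) : Bᵀ *ᵥ (Aᵀ *ᵥ v) = 0 := by
  rw [mulVec_mulVec, ← transpose_mul, hAB, transpose_zero, zero_mulVec]

theorem inv_mulVec_mulVec_mulVec_of_mul_eq_mul {l m n R : Type*} [Fintype l] [Fintype m]
    [Fintype n] [DecidableEq l] [CommRing R] {J : Matrix l l R} (hJ : IsUnit J.det)
    {A : Matrix l m R} {H : Matrix m n R} {B : Matrix l n R} (hAH : A * H = J * B)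
    (v : n → R) : J⁻¹ *ᵥ (A *ᵥ (H *ᵥ v)) = B *ᵥ v := by
  rw [mulVec_mulVec v A H, hAH, mulVec_mulVec, nonsing_inv_mul_cancel_left _ _ hJ]

theorem hasDerivAt_const_mulVec_s9 {m n 𝕜 𝔸 : Type*} [Finite m] [Fintype n]
    [NontriviallyNormedField 𝕜] [NormedRing 𝔸] [NormedAlgebra 𝕜 𝔸] (A : Matrix m n 𝔸)
    {f : 𝕜 → n → 𝔸} {f' : n → 𝔸} {t : 𝕜} (hf : HasDerivAt f f' t) :
    HasDerivAt (fun s => A *ᵥ f s) (A *ᵥ f') t := by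
  have := Fintype.ofFinite m
  exact hasDerivAt_pi.2 fun i =>
    HasDerivAt.fun_sum fun j _ => (hasDerivAt_pi.1 hf j).const_mul (A i j)

section DualVorticity

variable {C E V R : Type*} [Fintype E] [Fintype V] [DecidableEq V]

/-- The dual absolute vorticity `Ξ̂ = J⁻¹ D̄₂ M u` of the velocity coefficients `u`, where
`D̄₂ = D₁ᵀ`. Meaningful only for invertible `J`, as `J⁻¹ = 0` otherwise. -/
noncomputable def dualVorticity [CommRing R] (J : Matrix V V R) (D₁ : Matrix E V R)
    (M : Matrix E E R) (u : E → R) : V → R :=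
  J⁻¹ *ᵥ (D₁ᵀ *ᵥ (M *ᵥ u))

theorem dualVorticity_eq_neg_transpose_mulVec [Fintype C] [CommRing R] {D₂ : Matrix C E R}
    {D₁ : Matrix E V R} {M H : Matrix E E R} {J : Matrix V V R}
    (hJ : IsUnit J.det) (hDD : D₂ * D₁ = 0) (hDH : D₁ᵀ * H = J * D₁ᵀ)
    {u' q qhat : E → R} {p : C → R}
    (hmom : M *ᵥ u' = -(M *ᵥ q) - (-D₂ᵀ) *ᵥ p) (hq : M *ᵥ q = H *ᵥ qhat) :
    dualVorticity J D₁ M u' = -(D₁ᵀ *ᵥ qhat) := by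
  have curl_momentum : D₁ᵀ *ᵥ (M *ᵥ u') = -(D₁ᵀ *ᵥ (H *ᵥ qhat)) := by
    rw [hmom, hq, neg_mulVec, sub_neg_eq_add, mulVec_add, mulVec_neg,
      transpose_mulVec_transpose_mulVec_eq_zero hDD, add_zero]
  rw [dualVorticity, curl_momentum, mulVec_neg, inv_mulVec_mulVec_mulVec_of_mul_eq_mul hJ hDH]

theorem hasDerivAt_dualVorticity {𝕜 𝔸 : Type*} [NontriviallyNormedField 𝕜] [NormedCommRing 𝔸]
    [NormedAlgebra 𝕜 𝔸] (J : Matrix V V 𝔸) (D₁ : Matrix E V 𝔸) (M : Matrix E E 𝔸)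
    {U : 𝕜 → E → 𝔸} {u' : E → 𝔸} {t : 𝕜} (hU : HasDerivAt U u' t) :
    HasDerivAt (fun s => dualVorticity J D₁ M (U s)) (dualVorticity J D₁ M u') t :=
  hasDerivAt_const_mulVec_s9 J⁻¹ (hasDerivAt_const_mulVec_s9 D₁ᵀ (hasDerivAt_const_mulVec_s9 M hU))

/-- `p` plays the role of the discrete potential `L S`. -/
theorem dual_pv_evolution_general [Fintype C] {𝕜 𝔸 : Type*} [NontriviallyNormedField 𝕜]
    [NormedCommRing 𝔸] [NormedAlgebra 𝕜 𝔸] {D₂ : Matrix C E 𝔸} {D₁ : Matrix E V 𝔸}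
    {M H : Matrix E E 𝔸} {J : Matrix V V 𝔸}
    (hJ : IsUnit J.det) (hDD : D₂ * D₁ = 0) (hDH : D₁ᵀ * H = J * D₁ᵀ)
    {U : 𝕜 → E → 𝔸} {u' q qhat : E → 𝔸} {p : C → 𝔸} {t : 𝕜} (hU : HasDerivAt U u' t)
    (hmom : M *ᵥ u' = -(M *ᵥ q) - (-D₂ᵀ) *ᵥ p) (hq : M *ᵥ q = H *ᵥ qhat) :
    HasDerivAt (fun s => dualVorticity J D₁ M (U s)) (-(D₁ᵀ *ᵥ qhat)) t := by
  rw [← dualVorticity_eq_neg_transpose_mulVec hJ hDD hDH hmom hq]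
  exact hasDerivAt_dualVorticity J D₁ M hU

end DualVorticity

/-- Dual potential vorticity evolution equation: assuming `J` invertible,
`D₂ D₁ = 0`, `D̄₂ H = J D̄₂` (with `D̄₁ = -D₂ᵀ`, `D̄₂ = D₁ᵀ`), if the
velocity obeys the momentum equation `M U' = -M Q⊥ - D̄₁ (L S)` and the
PV fluxes are related by `M Q⊥ = H Q̂⊥`, then the dual absolute vorticity
`Ξ̂ = J⁻¹ D̄₂ M U` is differentiable and evolves in flux form:
`Ξ̂' + D̄₂ Q̂⊥ = 0`. -/
theorem dual_pv_evolution
    {C E V : Type*} [Fintype C] [Fintype E] [Fintype V] [DecidableEq V]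
    (D₂ : Matrix C E ℝ) (D₁ : Matrix E V ℝ)
    (L : Matrix C C ℝ) (M H : Matrix E E ℝ) (J : Matrix V V ℝ)
    (hJ : IsUnit J.det) (hDD : D₂ * D₁ = 0) (hDH : D₁ᵀ * H = J * D₁ᵀ)
    (U : ℝ → E → ℝ) (Ud : ℝ → E → ℝ)
    (Qperp Qhatperp : ℝ → E → ℝ) (S : ℝ → C → ℝ)
    (hUdiff : ∀ t : ℝ, HasDerivAt U (Ud t) t)
    (hmom : ∀ t : ℝ, M.mulVec (Ud t) =
      -(M.mulVec (Qperp t)) - (-D₂ᵀ).mulVec (L.mulVec (S t)))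
    (hQ : ∀ t : ℝ, M.mulVec (Qperp t) = H.mulVec (Qhatperp t)) :
    ∀ t : ℝ, HasDerivAt (fun s : ℝ => J⁻¹.mulVec (D₁ᵀ.mulVec (M.mulVec (U s))))
      (-(D₁ᵀ.mulVec (Qhatperp t))) t :=
  fun t => dual_pv_evolution_general hJ hDD hDH (hUdiff t) (hmom t) (hQ t)
end
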